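/- There exists a constant C > 0, independent of p and q, such that for every integer p ≥ 2 and every integer q with 0 ≤ q ≤ p−1, the matrices T and T̂_q satisfy ‖T − T̂_q‖₂ ≤ C (q+1)^{−2}, where ‖·‖₂ denotes the matrix 2-norm (spectral norm). -/

import Mathlib

open Polynomial

/-- The `k`-th Legendre polynomial (Rodrigues' formula), normalized so that `L_k(1) = 1`
and `∫_{−1}^{1} L_k L_j ds = 2δ_{kj}/(2k+1)`. -/
noncomputable def legendre (k : ℕ) : Polynomial ℝ :=
  ((2 ^ k * (Nat.factorial k) : ℝ))⁻¹ •
    ((fun q => Polynomial.derivative q)^[k] ((Polynomial.X ^ 2 - 1) ^ k))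

/-- The reconstruction operator `I : P_p → P_{p+1}`,
`I v := v − v(−1)·(−1)^p (L_p − L_{p+1})/2`. -/
noncomputable def recon (p : ℕ) (v : Polynomial ℝ) : Polynomial ℝ :=
  v - (v.eval (-1) * (-1 : ℝ) ^ p / 2) • (legendre p - legendre (p + 1))

/-- The basis polynomials `ψ_0 := (L_1 + L_0)/√2`,
`ψ_k := (L_{k+1} − L_{k−1})/√(4k+2)` for `1 ≤ k ≤ p−1`, and
`ψ_p := (L_p − L_{p−1})/√(4p+2)`. -/
noncomputable def psi (p k : ℕ) : Polynomial ℝ :=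
  if k = 0 then (Real.sqrt 2)⁻¹ • (legendre 1 + legendre 0)
  else if k = p then (Real.sqrt (4 * (p : ℝ) + 2))⁻¹ • (legendre p - legendre (p - 1))
  else (Real.sqrt (4 * (k : ℝ) + 2))⁻¹ • (legendre (k + 1) - legendre (k - 1))

/-- The symmetric `(p+1) × (p+1)` matrix `T` with entries `T_{kj} := ∫_{−1}^{1} ψ_k ψ_j ds`. -/
noncomputable def Tmat (p : ℕ) : Matrix (Fin (p + 1)) (Fin (p + 1)) ℝ :=
  fun k j => ∫ s in (-1 : ℝ)..1, (psi p (k : ℕ)).eval s * (psi p (j : ℕ)).eval s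

/-- The truncated matrix `T̂_q`, whose `(k,j)` entry equals `T_{kj}` if `k ≤ q` and `j ≤ q`,
and `0` otherwise. -/
noncomputable def Thatmat (p q : ℕ) : Matrix (Fin (p + 1)) (Fin (p + 1)) ℝ :=
  fun k j => if (k : ℕ) ≤ q ∧ (j : ℕ) ≤ q then Tmat p k j else 0

/-!
`T` is the Gram matrix of the `ψ_k`. Up to the factor `(4k+2)^{-1/2}`, `ψ_k` is a difference of two
Legendre polynomials of index about `k`, each of squared norm `O(k⁻¹)`, so `‖ψ_k‖² = O(k⁻²)`; by
Cauchy–Schwarz `|T_{kj}| ≤ 2 / ((k+1)(j+1))`. Moreover `ψ_k` has degree at most `k+1` and `ψ_j` is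
orthogonal to polynomials of degree below `j-1`, so `T` is pentadiagonal. A nonzero entry of
`T - T̂_q` thus has both indices at least `q-1`, hence size `O((q+1)⁻²)`, and a matrix with at most
five nonzero diagonals has spectral norm at most five times its largest entry.
-/

section SpectralNorm

open scoped Matrix.Norms.L2Operator

variable {𝕜 : Type*} [RCLike 𝕜]

theorem norm_sum_mul_sq_le {ι : Type*} (s : Finset ι) (a x : ι → 𝕜) :
    ‖∑ j ∈ s, a j * x j‖ ^ 2 ≤ (∑ j ∈ s, ‖a j‖) * ∑ j ∈ s, ‖a j‖ * ‖x j‖ ^ 2 := by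
  calc
    ‖∑ j ∈ s, a j * x j‖ ^ 2 ≤ (∑ j ∈ s, ‖a j‖ * ‖x j‖) ^ 2 := by
      gcongr
      simpa only [norm_mul] using norm_sum_le s fun j ↦ a j * x j
    _ ≤ (∑ j ∈ s, ‖a j‖) * ∑ j ∈ s, ‖a j‖ * ‖x j‖ ^ 2 :=
      Finset.sum_sq_le_sum_mul_sum_of_sq_le_mul s (fun _ _ ↦ by positivity)
        (fun _ _ ↦ by positivity) fun _ _ ↦ by rw [mul_pow, sq, mul_assoc]

theorem l2_opNorm_le_sqrt_of_sum_norm_le {m n : Type*} [Fintype m] [Fintype n] [DecidableEq n]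
    {A : Matrix m n 𝕜} {R C : ℝ} (hrow : ∀ i, ∑ j, ‖A i j‖ ≤ R) (hcol : ∀ j, ∑ i, ‖A i j‖ ≤ C) :
    ‖A‖ ≤ √(R * C) := by
  obtain _ | ⟨⟨i₀⟩⟩ := isEmpty_or_nonempty m
  · simp [Subsingleton.elim A 0]
  have hR : 0 ≤ R := (Finset.sum_nonneg fun _ _ ↦ norm_nonneg _).trans (hrow i₀)
  refine ContinuousLinearMap.opNorm_le_bound _ (Real.sqrt_nonneg _) fun x ↦ ?_
  rw [← Real.sqrt_sq (norm_nonneg x), ← Real.sqrt_mul' _ (sq_nonneg _)]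
  refine Real.le_sqrt_of_sq_le ?_
  rw [EuclideanSpace.norm_sq_eq, EuclideanSpace.norm_sq_eq]
  calc
    ∑ i, ‖∑ j, A i j * x j‖ ^ 2 ≤ ∑ i, R * ∑ j, ‖A i j‖ * ‖x j‖ ^ 2 := by
      gcongr with i
      grw [norm_sum_mul_sq_le, hrow i]
    _ = R * ∑ j, (∑ i, ‖A i j‖) * ‖x j‖ ^ 2 := by
      rw [← Finset.mul_sum, Finset.sum_comm]
      simp_rw [Finset.sum_mul]
    _ ≤ R * ∑ j, C * ‖x j‖ ^ 2 := by
      gcongr with j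
      exact hcol j
    _ = R * C * ∑ j, ‖x j‖ ^ 2 := by rw [← Finset.mul_sum, mul_assoc]

theorem sum_le_of_eq_zero_of_dist_lt {n b i : ℕ} {f : Fin n → ℝ} {M : ℝ} (hM : 0 ≤ M)
    (hf : ∀ j, f j ≤ M) (hzero : ∀ j : Fin n, b < Nat.dist i j → f j = 0) :
    ∑ j, f j ≤ (2 * b + 1) * M := by
  let s : Finset (Fin n) := {j | Nat.dist i j ≤ b}
  have hcard : s.card ≤ 2 * b + 1 := calc
    s.card ≤ (Finset.Icc (i - b) (i + b)).card := by
      refine Finset.card_le_card_of_injOn Fin.val (fun j hj ↦ ?_) Fin.val_injective.injOn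
      have hdist : i - j + (j - i) ≤ b := (Finset.mem_filter_univ j).mp hj
      rw [Finset.mem_coe, Finset.mem_Icc]
      omega
    _ ≤ 2 * b + 1 := by rw [Nat.card_Icc]; omega
  calc
    ∑ j, f j = ∑ j ∈ s, f j := by
      refine (Finset.sum_subset s.subset_univ fun j _ hj ↦ hzero j ?_).symm
      simpa [s] using hj
    _ ≤ s.card * M := by
      simpa only [nsmul_eq_mul] using Finset.sum_le_card_nsmul s f M fun j _ ↦ hf j
    _ ≤ (2 * b + 1) * M := by
      gcongr
      exact_mod_cast hcard

theorem l2_opNorm_le_of_banded {m n b : ℕ} {A : Matrix (Fin m) (Fin n) 𝕜} {M : ℝ} (hM : 0 ≤ M)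
    (hA : ∀ i j, ‖A i j‖ ≤ M) (hband : ∀ (i : Fin m) (j : Fin n), b < Nat.dist i j → A i j = 0) :
    ‖A‖ ≤ (2 * b + 1) * M := by
  have hrow (i : Fin m) : ∑ j, ‖A i j‖ ≤ (2 * b + 1) * M :=
    sum_le_of_eq_zero_of_dist_lt hM (hA i) fun j hij ↦ norm_eq_zero.mpr (hband i j hij)
  have hcol (j : Fin n) : ∑ i, ‖A i j‖ ≤ (2 * b + 1) * M :=
    sum_le_of_eq_zero_of_dist_lt hM (hA · j) fun i hij ↦
      norm_eq_zero.mpr (hband i j (Nat.dist_comm j i ▸ hij))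
  simpa only [Real.sqrt_mul_self (by positivity : 0 ≤ (2 * b + 1) * M)] using
    l2_opNorm_le_sqrt_of_sum_norm_le hrow hcol

end SpectralNorm

section IntegralForm

variable {a b : ℝ}

/-- The `L²` pairing `∫ s in a..b, f s * g s` as a bilinear form on real polynomials. The endpoints
are unordered, so it is an inner product only for `a < b`. -/
noncomputable def integralForm (a b : ℝ) : LinearMap.BilinForm ℝ ℝ[X] :=
  LinearMap.compr₂ (LinearMap.mul ℝ ℝ[X])
    { toFun := fun f ↦ ∫ s in a..b, f.eval s
      map_add' := fun f g ↦ by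
        simpa only [eval_add] using intervalIntegral.integral_add
          (f.continuous.intervalIntegrable a b) (g.continuous.intervalIntegrable a b)
      map_smul' := fun c f ↦ by simp }

theorem integralForm_apply (f g : ℝ[X]) :
    integralForm a b f g = ∫ s in a..b, f.eval s * g.eval s := by
  simp [integralForm]

theorem integralForm_mul_left (f g h : ℝ[X]) :
    integralForm a b (f * g) h = integralForm a b f (g * h) := by
  simp only [integralForm_apply, eval_mul, mul_assoc]

theorem integralForm_isSymm : LinearMap.IsSymm (integralForm a b) :=
  ⟨fun f g ↦ by simp only [integralForm_apply, mul_comm, RingHom.id_apply]⟩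

theorem integralForm_comm (f g : ℝ[X]) : integralForm a b f g = integralForm a b g f :=
  integralForm_isSymm.eq f g

theorem integralForm_self_nonneg (hab : a ≤ b) (f : ℝ[X]) : 0 ≤ integralForm a b f f := by
  rw [integralForm_apply]
  exact intervalIntegral.integral_nonneg hab fun s _ ↦ mul_self_nonneg (f.eval s)

theorem integralForm_derivative_left (f g : ℝ[X]) :
    integralForm a b (derivative f) g =
      f.eval b * g.eval b - f.eval a * g.eval a - integralForm a b f (derivative g) := by
  simp only [integralForm_apply]
  rw [intervalIntegral.integral_mul_deriv_eq_deriv_mul (fun s _ ↦ f.hasDerivAt s)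
    (fun s _ ↦ g.hasDerivAt s) (f.derivative.continuous.intervalIntegrable a b)
    (g.derivative.continuous.intervalIntegrable a b), sub_sub_cancel]

theorem integralForm_iterate_derivative_left {n : ℕ} {f : ℝ[X]} (g : ℝ[X])
    (ha : ∀ i < n, (derivative^[i] f).eval a = 0) (hb : ∀ i < n, (derivative^[i] f).eval b = 0) :
    integralForm a b (derivative^[n] f) g = (-1) ^ n * integralForm a b f (derivative^[n] g) := by
  induction n generalizing g with
  | zero => simp
  | succ n ih =>
    rw [Function.iterate_succ_apply', integralForm_derivative_left, ha n n.lt_succ_self,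
      hb n n.lt_succ_self, ih _ (fun i hi ↦ ha i (hi.trans n.lt_succ_self))
      (fun i hi ↦ hb i (hi.trans n.lt_succ_self)), Function.iterate_succ_apply]
    ring

end IntegralForm

section Legendre

theorem eval_iterate_derivative_X_sq_sub_one_pow_eq_zero {r : ℝ} (hr : r ^ 2 = 1) {i n : ℕ}
    (hi : i < n) : (derivative^[i] ((X ^ 2 - 1 : ℝ[X]) ^ n)).eval r = 0 := by
  refine eval_eq_zero_of_dvd_of_eval_eq_zero (pow_sub_dvd_iterate_derivative_pow _ n i) ?_
  simp [hr, Nat.sub_ne_zero_of_lt hi]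

theorem eval_iterate_derivative_X_sq_sub_one_pow {r : ℝ} (hr : r ^ 2 = 1) (n : ℕ) :
    (derivative^[n] ((X ^ 2 - 1 : ℝ[X]) ^ n)).eval r = n.factorial * (2 * r) ^ n := by
  have htaylor : taylor r ((X ^ 2 - 1 : ℝ[X]) ^ n) = X ^ n * (X + C (2 * r)) ^ n := by
    have hC : (C r ^ 2 : ℝ[X]) = 1 := by rw [← C_pow, hr, C_1]
    rw [taylor_pow, ← mul_pow, map_sub, taylor_pow, taylor_X, taylor_one, C_1, C_mul, C_ofNat]
    congr 1
    linear_combination hC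
  rw [← factorial_smul_hasseDeriv, LinearMap.smul_apply, eval_smul, ← taylor_coeff, htaylor,
    coeff_X_pow_mul', if_pos le_rfl, Nat.sub_self, coeff_zero_eq_eval_zero]
  simp

theorem legendre_eq (n : ℕ) :
    legendre n = (2 ^ n * n.factorial : ℝ)⁻¹ • derivative^[n] ((X ^ 2 - 1) ^ n) :=
  rfl

theorem eval_legendre_of_sq_eq_one {r : ℝ} (hr : r ^ 2 = 1) (n : ℕ) :
    (legendre n).eval r = r ^ n := by
  rw [legendre_eq, eval_smul, eval_iterate_derivative_X_sq_sub_one_pow hr, smul_eq_mul, mul_pow]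
  field_simp

theorem degree_legendre_le (n : ℕ) : (legendre n).degree ≤ n := by
  have hbase : ((X ^ 2 - 1 : ℝ[X]) ^ n).natDegree ≤ n * 2 :=
    natDegree_pow_le_of_le n (by compute_degree)
  have hderiv := natDegree_iterate_derivative ((X ^ 2 - 1 : ℝ[X]) ^ n) n
  rw [legendre_eq]
  exact (degree_smul_le _ _).trans (degree_le_of_natDegree_le (by omega))

theorem integralForm_legendre_of_degree_lt {n : ℕ} {f : ℝ[X]} (hf : f.degree < n) :
    integralForm (-1) 1 (legendre n) f = 0 := by
  rw [legendre_eq, map_smul, LinearMap.smul_apply, integralForm_iterate_derivative_left f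
    (fun i ↦ eval_iterate_derivative_X_sq_sub_one_pow_eq_zero (by norm_num))
    (fun i ↦ eval_iterate_derivative_X_sq_sub_one_pow_eq_zero (by norm_num)),
    iterate_derivative_eq_zero_of_degree_lt hf, map_zero, mul_zero, smul_zero]

theorem integralForm_legendre_of_lt {m n : ℕ} (h : m < n) :
    integralForm (-1) 1 (legendre n) (legendre m) = 0 :=
  integralForm_legendre_of_degree_lt ((degree_legendre_le m).trans_lt (by exact_mod_cast h))

theorem degree_X_mul_derivative_sub_lt {R : Type*} [CommRing R] {f : R[X]} {n : ℕ}
    (hf : f.degree ≤ n) :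
    (X * derivative f - (n : R) • f).degree < (n : WithBot ℕ) := by
  rw [degree_lt_iff_coeff_zero]
  intro m hm
  have hcoeff : (X * derivative f - (n : R) • f).coeff m = (m - n) * f.coeff m := by
    cases m with
    | zero => simp
    | succ m =>
      simp only [coeff_sub, coeff_X_mul, coeff_derivative, coeff_smul, smul_eq_mul, Nat.cast_succ]
      ring
  obtain rfl | hlt := hm.eq_or_lt
  · rw [hcoeff, sub_self, zero_mul]
  · rw [hcoeff, coeff_eq_zero_of_degree_lt (hf.trans_lt (by exact_mod_cast hlt)), mul_zero]

theorem integralForm_legendre_self (n : ℕ) :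
    integralForm (-1) 1 (legendre n) (legendre n) = 2 / (2 * n + 1) := by
  set L := legendre n
  -- Integrate `(X * L²)'`: modulo lower-degree terms, orthogonal to `L`, `X * L'` equals `n * L`.
  have hXderiv : integralForm (-1) 1 L (X * derivative L) = n * integralForm (-1) 1 L L := by
    have horth := integralForm_legendre_of_degree_lt
      (degree_X_mul_derivative_sub_lt (degree_legendre_le n))
    rwa [map_sub, map_smul, sub_eq_zero] at horth
  have hparts := integralForm_derivative_left (a := -1) (b := 1) (X * L) L
  have hone : L.eval 1 = 1 := by simpa using eval_legendre_of_sq_eq_one (one_pow 2) n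
  have hnegone : L.eval (-1) ^ 2 = 1 := by
    rw [eval_legendre_of_sq_eq_one (by norm_num), ← pow_mul, mul_comm, pow_mul]
    norm_num
  rw [derivative_mul, derivative_X, one_mul, map_add, LinearMap.add_apply,
    integralForm_comm (X * derivative L), mul_comm X L, integralForm_mul_left L X,
    hXderiv] at hparts
  simp only [eval_mul, eval_X, hone] at hparts
  rw [eq_div_iff (by positivity)]
  linear_combination hparts + hnegone

end Legendre

section Psi

theorem exists_psi_succ_eq (p k : ℕ) :
    ∃ a > k, psi p (k + 1) = (√(4 * ((k + 1 : ℕ) : ℝ) + 2))⁻¹ • (legendre a - legendre k) := by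
  by_cases h : k + 1 = p
  · exact ⟨k + 1, k.lt_succ_self, by simp [psi, ← h]⟩
  · exact ⟨k + 2, by omega, by simp [psi, h]⟩

theorem degree_psi_le (p k : ℕ) : (psi p k).degree ≤ (k + 1 : ℕ) := by
  have hL (i : ℕ) (hi : i ≤ k + 1) : (legendre i).degree ≤ (k + 1 : ℕ) :=
    (degree_legendre_le i).trans (by exact_mod_cast hi)
  unfold psi
  split_ifs with hk hp <;> refine (degree_smul_le _ _).trans ?_
  · exact (degree_add_le _ _).trans (max_le (hL 1 (by omega)) (hL 0 (by omega)))
  · exact (degree_sub_le _ _).trans (max_le (hL p (by omega)) (hL (p - 1) (by omega)))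
  · exact (degree_sub_le _ _).trans (max_le (hL (k + 1) le_rfl) (hL (k - 1) (by omega)))

theorem integralForm_psi_succ_of_degree_lt (p : ℕ) {k : ℕ} {f : ℝ[X]} (hf : f.degree < k) :
    integralForm (-1) 1 (psi p (k + 1)) f = 0 := by
  obtain ⟨a, hak, hpsi⟩ := exists_psi_succ_eq p k
  have hfa : f.degree < a := hf.trans (by exact_mod_cast hak)
  simp [hpsi, integralForm_legendre_of_degree_lt hf, integralForm_legendre_of_degree_lt hfa]

theorem integralForm_psi_zero_self (p : ℕ) :
    integralForm (-1) 1 (psi p 0) (psi p 0) = 4 / 3 := by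
  have horth := integralForm_legendre_of_lt zero_lt_one
  have hsqrt : (√2)⁻¹ * (√2)⁻¹ = (2 : ℝ)⁻¹ := by rw [← mul_inv, Real.mul_self_sqrt zero_le_two]
  simp only [psi, if_true, map_smul, map_add, LinearMap.smul_apply, LinearMap.add_apply,
    smul_eq_mul, integralForm_legendre_self, horth, integralForm_comm (legendre 0) (legendre 1)]
  linear_combination (8 / 3 : ℝ) * hsqrt

theorem integralForm_psi_succ_self_le (p k : ℕ) :
    integralForm (-1) 1 (psi p (k + 1)) (psi p (k + 1)) ≤ 2 / ((k + 1 : ℕ) + 1) ^ 2 := by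
  obtain ⟨a, hak, hpsi⟩ := exists_psi_succ_eq p k
  have hsqrt : (√(4 * ((k + 1 : ℕ) : ℝ) + 2))⁻¹ * (√(4 * ((k + 1 : ℕ) : ℝ) + 2))⁻¹ =
      (4 * ((k + 1 : ℕ) : ℝ) + 2)⁻¹ := by
    rw [← mul_inv, Real.mul_self_sqrt (by positivity)]
  have hself : integralForm (-1) 1 (psi p (k + 1)) (psi p (k + 1)) =
      (4 * ((k + 1 : ℕ) : ℝ) + 2)⁻¹ * (2 / (2 * a + 1) + 2 / (2 * k + 1)) := by
    simp only [hpsi, map_smul, map_sub, LinearMap.smul_apply, LinearMap.sub_apply, smul_eq_mul,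
      integralForm_legendre_self, integralForm_legendre_of_lt hak,
      integralForm_comm (legendre k) (legendre a)]
    linear_combination (2 / (2 * a + 1) + 2 / (2 * k + 1) : ℝ) * hsqrt
  have ha : (k : ℝ) + 1 ≤ a := by exact_mod_cast hak
  calc
    integralForm (-1) 1 (psi p (k + 1)) (psi p (k + 1))
      ≤ (4 * ((k + 1 : ℕ) : ℝ) + 2)⁻¹ * (2 / (2 * (k + 1) + 1) + 2 / (2 * k + 1)) := by
      grw [hself, ha]
    _ ≤ 2 / ((k + 1 : ℕ) + 1) ^ 2 := by
      push_cast
      field_simp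
      nlinarith [(by positivity : (0 : ℝ) ≤ k ^ 3)]

theorem integralForm_psi_self_le (p k : ℕ) :
    integralForm (-1) 1 (psi p k) (psi p k) ≤ 2 / (k + 1) ^ 2 := by
  cases k with
  | zero => norm_num [integralForm_psi_zero_self]
  | succ k => exact integralForm_psi_succ_self_le p k

end Psi

section GramMatrix

variable {p q : ℕ} (k j : Fin (p + 1))

theorem Tmat_eq_integralForm : Tmat p k j = integralForm (-1) 1 (psi p k) (psi p j) :=
  (integralForm_apply _ _).symm

theorem Tmat_comm : Tmat p k j = Tmat p j k := by
  simp only [Tmat_eq_integralForm, integralForm_comm]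

theorem abs_Tmat_le : |Tmat p k j| ≤ 2 / (((k : ℝ) + 1) * ((j : ℝ) + 1)) := by
  have hcauchy := (integralForm (-1) 1).apply_sq_le_of_symm
    (integralForm_self_nonneg (by norm_num)) integralForm_isSymm (psi p k) (psi p j)
  refine abs_le_of_sq_le_sq ?_ (by positivity)
  calc
    Tmat p k j ^ 2 ≤ 2 / ((k : ℝ) + 1) ^ 2 * (2 / ((j : ℝ) + 1) ^ 2) := by
      rw [Tmat_eq_integralForm]
      refine hcauchy.trans ?_
      gcongr
      · exact integralForm_self_nonneg (by norm_num) _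
      · exact integralForm_psi_self_le p k
      · exact integralForm_psi_self_le p j
    _ = (2 / (((k : ℝ) + 1) * ((j : ℝ) + 1))) ^ 2 := by field_simp

variable {k j}

theorem Tmat_eq_zero_of_dist_gt (h : 2 < Nat.dist k j) : Tmat p k j = 0 := by
  wlog hjk : j < k generalizing k j
  · rw [Tmat_comm]
    exact this (Nat.dist_comm k j ▸ h) (by simp only [Nat.dist] at h; omega)
  obtain ⟨i, hi⟩ : ∃ i, (k : ℕ) = i + 1 := Nat.exists_eq_succ_of_ne_zero (by omega)
  have hdeg : (psi p j).degree < i := (degree_psi_le p j).trans_lt <| by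
    simp only [Nat.dist] at h
    exact_mod_cast (by omega : (j : ℕ) + 1 < i)
  rw [Tmat_eq_integralForm, hi, integralForm_psi_succ_of_degree_lt p hdeg]

theorem Tmat_sub_Thatmat_eq_zero_of_dist_gt (h : 2 < Nat.dist k j) :
    (Tmat p - Thatmat p q) k j = 0 := by
  simp [Thatmat, Tmat_eq_zero_of_dist_gt h]

theorem abs_Tmat_le_of_lt_of_dist_le (hj : q < j) (h : Nat.dist k j ≤ 2) :
    |Tmat p k j| ≤ 4 / (q + 1) ^ 2 := by
  simp only [Nat.dist] at h
  have hj' : (q : ℝ) + 1 ≤ (j : ℝ) + 1 := by exact_mod_cast (by omega : q + 1 ≤ (j : ℕ) + 1)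
  have hk' : (q : ℝ) + 1 ≤ 2 * ((k : ℝ) + 1) := by
    exact_mod_cast (by omega : q + 1 ≤ 2 * ((k : ℕ) + 1))
  calc
    |Tmat p k j| ≤ 2 / (((k : ℝ) + 1) * ((j : ℝ) + 1)) := abs_Tmat_le k j
    _ = 4 / (2 * ((k : ℝ) + 1) * ((j : ℝ) + 1)) := by field_simp; norm_num
    _ ≤ 4 / ((q + 1) * (q + 1)) := by gcongr
    _ = 4 / (q + 1) ^ 2 := by rw [sq]

variable (p q k j) in
theorem abs_Tmat_sub_Thatmat_le : |(Tmat p - Thatmat p q) k j| ≤ 4 / (q + 1) ^ 2 := by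
  by_cases hband : 2 < Nat.dist k j
  · rw [Tmat_sub_Thatmat_eq_zero_of_dist_gt hband, abs_zero]
    positivity
  by_cases hkj : (k : ℕ) ≤ q ∧ (j : ℕ) ≤ q
  · simp only [Matrix.sub_apply, Thatmat, if_pos hkj, sub_self, abs_zero]
    positivity
  rw [Matrix.sub_apply, Thatmat, if_neg hkj, sub_zero]
  obtain hk | hj := not_and_or.mp hkj
  · rw [Tmat_comm]
    exact abs_Tmat_le_of_lt_of_dist_le (not_le.mp hk) (Nat.dist_comm k j ▸ not_lt.mp hband)
  · exact abs_Tmat_le_of_lt_of_dist_le (not_le.mp hj) (not_lt.mp hband)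

end GramMatrix

/-- **Spectral norm estimate for the truncation.** There is a constant `C > 0`, independent
of `p` and `q`, such that for every `p ≥ 2` and every `0 ≤ q ≤ p−1`,
`‖T − T̂_q‖₂ ≤ C (q+1)⁻²`, where `‖·‖₂` is the matrix 2-norm (the operator norm on
Euclidean space). -/
theorem truncation_spectral_norm_bound :
    ∃ C : ℝ, 0 < C ∧ ∀ p : ℕ, 2 ≤ p → ∀ q : ℕ, q ≤ p - 1 →
      ‖Matrix.toEuclideanCLM (𝕜 := ℝ) (Tmat p - Thatmat p q)‖ ≤ C / ((q : ℝ) + 1) ^ 2 := by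
  refine ⟨20, by norm_num, fun p _ q _ ↦ ?_⟩
  calc
    ‖Matrix.toEuclideanCLM (𝕜 := ℝ) (Tmat p - Thatmat p q)‖
      ≤ (2 * (2 : ℕ) + 1) * (4 / ((q : ℝ) + 1) ^ 2) :=
      l2_opNorm_le_of_banded (by positivity) (abs_Tmat_sub_Thatmat_le p q)
        fun _ _ ↦ Tmat_sub_Thatmat_eq_zero_of_dist_gt
    _ = 20 / ((q : ℝ) + 1) ^ 2 := by push_cast; ring
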